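/- Let F be a field of characteristic p > 0, let n ≥ 1, let a₁, …, aₙ ∈ F^×, let b ∈ F ∖ ℘(F), and suppose β = N_{F_b/F}(u) ≠ 0 for some u ∈ F_b. Then for every i ∈ {1, …, n}, the classes of b·(da₁/a₁)∧…∧(daᵢ/aᵢ)∧…∧(daₙ/aₙ) and of (b + aᵢβ)·(da₁/a₁)∧…∧(d(aᵢβ)/(aᵢβ))∧…∧(daₙ/aₙ) are equal in H^{n+1}(F). -/

import Mathlib

/-!
Write `dlog x = dx / x`. The difference of the two forms is, in the `i`-th slot,
`(b + aᵢβ) dlog (aᵢβ) - b dlog aᵢ = b dlog β + d(aᵢβ)`, wedged with the other `dlog aⱼ`. The part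
coming from `d(aᵢβ)` is exact (`slot_dlog_D_mem`), so it remains to treat `b dlog β`, and this is a
statement about 1-forms: `b dlog β` lies in the subgroup generated by the exact forms `dx` and the
forms `(c^p - c) dlog a` (`dlog_norm_mem`).

The algebra `L = F_b` is a cyclic extension field of `F` (`artinSchreier_irreducible`,
`artinSchreier_isGalois`) generated by `t` with `t^p - t = b`. Since `L/F` is étale,
`Ω^1(L) = L ⊗ Ω^1(F)`, and there is a trace map `Tr` on 1-forms with `Tr (c da) = Tr(c) da` for
`a ∈ F`, `Tr (dx) = d Tr(x)` and `Tr (b dlog u) = b dlog N(u)` (`formTrace_extD`,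
`formTrace_dlog`). Let `γ : Ω^1(L) → Ω^1(L)/dL`, `x dlog a ↦ x^p dlog a`, be the inverse Cartier
operator (`exists_inverse_cartier`). On one hand, `(γ - 1)(t dlog u) = (t^p - t) dlog u = b dlog u`,
whose trace is `b dlog β`. On the other hand, `Ω^1(L)` is spanned by forms `c dlog a` with `c ∈ L`
and `a ∈ F`, and `Tr ((γ - 1)(c dlog a)) = (Tr(c)^p - Tr(c)) dlog a` modulo exact forms. Hence
`Tr ∘ (γ - 1)` takes values in the required subgroup.
-/

/-!
STATEMENT 2 (Lemma on differential forms, part (c)):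
Let `F` be a field of characteristic `p > 0`, `n ≥ 1`, `a₁, …, aₙ ∈ F^×`,
`b ∈ F ∖ ℘(F)`, and suppose `β = N_{F_b/F}(u) ≠ 0` for some `u ∈ F_b`, where
`F_b = F[T]/(T^p − T − b)` and the norm is the determinant of multiplication.
Then for every `i`, the classes of `b·(da₁/a₁)∧…∧(daᵢ/aᵢ)∧…∧(daₙ/aₙ)` and of
`(b + aᵢβ)·(da₁/a₁)∧…∧(d(aᵢβ)/(aᵢβ))∧…∧(daₙ/aₙ)` agree in `H^{n+1}(F)`.

`H^{n+1}(F)` is the cokernel of the Artin–Schreier map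
`℘ : Ω^n(F) → Ω^n(F)/dΩ^{n-1}(F)`, `c·dlog a₁∧…∧dlog aₙ ↦ (c^p−c)·dlog a₁∧…∧dlog aₙ`.
Since `Ω^n(F)` is generated as an additive group by logarithmic differentials, this
cokernel is the quotient of `Ω^n(F)` by the subgroup generated by `dΩ^{n-1}(F)`
together with all elements `(c^p−c)·(da₁/a₁)∧…∧(daₙ/aₙ)`.
-/

noncomputable section

open Polynomial

/-- The absolute differential `d : F → Ω^1(F)`. -/
def absD (F : Type*) [Field F] : F → KaehlerDifferential ℤ F :=
  fun a => KaehlerDifferential.D ℤ F a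

/-- The wedge `ω₁ ∧ … ∧ ωₙ` of `n` differential 1-forms, as an element of
`Ω^n(F) = ⋀[F]^n Ω^1(F)`. -/
def wedge (F : Type*) [Field F] (n : ℕ) (v : Fin n → KaehlerDifferential ℤ F) :
    ⋀[F]^n (KaehlerDifferential ℤ F) :=
  ⟨ExteriorAlgebra.ιMulti F n v, ExteriorAlgebra.ιMulti_range F n (Set.mem_range_self v)⟩

/-- The logarithmic differential form `b·(da₁/a₁) ∧ … ∧ (daₙ/aₙ) ∈ Ω^n(F)`. -/
def logForm (F : Type*) [Field F] (n : ℕ) (b : F) (a : Fin n → F) :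
    ⋀[F]^n (KaehlerDifferential ℤ F) :=
  b • wedge F n (fun j => (a j)⁻¹ • absD F (a j))

/-- The subgroup `dΩ^{n-1}(F)` of `Ω^n(F)`: the image of `d : Ω^{n-1}(F) → Ω^n(F)`,
i.e. the additive subgroup generated by all `dc₁ ∧ … ∧ dcₙ`. -/
def dOmega (F : Type*) [Field F] (n : ℕ) :
    AddSubgroup (⋀[F]^n (KaehlerDifferential ℤ F)) :=
  AddSubgroup.closure {ω | ∃ c : Fin n → F, ω = wedge F n (fun j => absD F (c j))}

/-- The subgroup of `Ω^n(F)` whose quotient defines `H^{n+1}(F)`: it is generated by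
`dΩ^{n-1}(F)` together with the image of the Artin–Schreier map, i.e. all elements
`(c^p − c)·(da₁/a₁)∧…∧(daₙ/aₙ)` with `c ∈ F`, `a₁,…,aₙ ∈ F^×`. -/
def hRel (F : Type*) [Field F] (p n : ℕ) :
    AddSubgroup (⋀[F]^n (KaehlerDifferential ℤ F)) :=
  dOmega F n ⊔ AddSubgroup.closure
    {ω | ∃ (c : F) (a : Fin n → F), (∀ j, a j ≠ 0) ∧ ω = logForm F n (c ^ p - c) a}

/-- `H^{n+1}(F)`, the cokernel of the Artin–Schreier map
`℘ : Ω^n(F) → Ω^n(F)/dΩ^{n-1}(F)`. -/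
def Hgroup (F : Type*) [Field F] (p n : ℕ) :=
  (⋀[F]^n (KaehlerDifferential ℤ F)) ⧸ hRel F p n

/-- The class of an `n`-form in `H^{n+1}(F)`. -/
def hClass (F : Type*) [Field F] (p n : ℕ) (ω : ⋀[F]^n (KaehlerDifferential ℤ F)) :
    Hgroup F p n :=
  QuotientAddGroup.mk' (hRel F p n) ω

open TensorProduct

/-! ### The inverse Cartier operator on 1-forms -/

/-- The space `Ω^1(K)` with `K` acting through the Frobenius: `x • ω = x^p ω`. It is a type synonym,
so that this action does not clash with the usual one. -/
def FrobeniusForms (K : Type*) [Field K] (_p : ℕ) : Type _ := Ω[K⁄ℤ]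

namespace FrobeniusForms
variable (K : Type*) [Field K] (p : ℕ)

instance : AddCommGroup (FrobeniusForms K p) := inferInstanceAs (AddCommGroup (Ω[K⁄ℤ]))

/-- The tautological identification of `Ω^1(K)` with its Frobenius twist. -/
def of : Ω[K⁄ℤ] ≃+ FrobeniusForms K p := AddEquiv.refl _

variable [Fact p.Prime] [CharP K p]

instance : Module K (FrobeniusForms K p) :=
  Module.compHom (Ω[K⁄ℤ]) (frobenius K p)

theorem smul_of (x : K) (m : Ω[K⁄ℤ]) : x • of K p m = of K p (x ^ p • m) := rfl

omit [Fact p.Prime] in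
theorem pow_smul_D (x y : K) :
    x ^ p • KaehlerDifferential.D ℤ K y = KaehlerDifferential.D ℤ K (x ^ p * y) := by
  rw [Derivation.leibniz, Derivation.leibniz_pow, ← Nat.cast_smul_eq_nsmul K p, CharP.cast_eq_zero]
  simp

/-- The exact forms `dK`; they are stable under multiplication by `p`-th powers, hence form a
subspace of the Frobenius twist. -/
def exactForms : Submodule K (FrobeniusForms K p) where
  carrier := Set.range fun x => of K p (KaehlerDifferential.D ℤ K x)
  add_mem' := by
    rintro _ _ ⟨x, rfl⟩ ⟨y, rfl⟩
    exact ⟨x + y, by simp⟩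
  zero_mem' := ⟨0, by simp⟩
  smul_mem' := by
    rintro c _ ⟨x, rfl⟩
    exact ⟨c ^ p * x, by simp only [smul_of, pow_smul_D]⟩

omit [CharP K p] in
/-- The form `(x + y)^(p-1) d(x + y) - x^(p-1) dx - y^(p-1) dy` is exact: it is the differential of
the integral polynomial `((x + y)^p - x^p - y^p) / p`. This is what makes `x ↦ x^(p-1) dx` additive
modulo exact forms. -/
theorem add_pow_pred (x y : K) : ∃ r : K,
    (x + y) ^ (p - 1) • (KaehlerDifferential.D ℤ K x + KaehlerDifferential.D ℤ K y)
      = x ^ (p - 1) • KaehlerDifferential.D ℤ K x + y ^ (p - 1) • KaehlerDifferential.D ℤ K y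
        + KaehlerDifferential.D ℤ K r := by
  obtain ⟨q, hq⟩ : ∃ q, p = q + 1 := ⟨p - 1, by have := (Fact.out : p.Prime).pos; omega⟩
  have hp : (q + 1).Prime := hq ▸ Fact.out
  have hdiv : ∀ j < q, ∃ r : ℕ, (q + 1).choose (j + 1) = (q + 1) * r := fun j hj =>
    hp.dvd_choose_self (by omega) (by omega)
  choose! r hr using hdiv
  have h1 : ∀ j < q, r j * (j + 1) = q.choose j := fun j hj => by
    have := Nat.add_one_mul_choose_eq q j
    rw [hr j hj, mul_assoc] at this
    exact (Nat.eq_of_mul_eq_mul_left (Nat.succ_pos q) this).symm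
  have h2 : ∀ j < q, r j * (q - j) = q.choose (j + 1) := fun j hj => by
    have h3 := Nat.choose_succ_right_eq (q + 1) (j + 1)
    have h4 := Nat.add_one_mul_choose_eq q (j + 1)
    rw [← h4, hr j hj, mul_assoc, Nat.add_sub_add_right] at h3
    exact (Nat.eq_of_mul_eq_mul_left (Nat.succ_pos q) h3).symm
  refine ⟨∑ j ∈ Finset.range q, r j • (x ^ (j + 1) * y ^ (q - j)), ?_⟩
  have hx : (x + y) ^ q = (∑ j ∈ Finset.range q, (q.choose j : K) * (x ^ j * y ^ (q - j)))
      + x ^ q := by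
    rw [add_pow, Finset.sum_range_succ]
    simp [mul_comm]
  have hy : (x + y) ^ q =
      (∑ j ∈ Finset.range q, (q.choose (j + 1) : K) * (x ^ (j + 1) * y ^ (q - j - 1)))
      + y ^ q := by
    rw [add_pow, Finset.sum_range_succ']
    simp [mul_comm, Nat.sub_sub]
  rw [hq, Nat.add_sub_cancel, smul_add]
  nth_rewrite 1 [hx]
  rw [hy, map_sum]
  have key : ∀ j ∈ Finset.range q,
      KaehlerDifferential.D ℤ K (r j • (x ^ (j + 1) * y ^ (q - j))) =
      ((q.choose j : K) * (x ^ j * y ^ (q - j))) • KaehlerDifferential.D ℤ K x +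
      ((q.choose (j + 1) : K) * (x ^ (j + 1) * y ^ (q - j - 1))) •
        KaehlerDifferential.D ℤ K y := by
    intro j hj
    have hj := Finset.mem_range.mp hj
    rw [map_nsmul, Derivation.leibniz, Derivation.leibniz_pow, Derivation.leibniz_pow,
      ← h1 j hj, ← h2 j hj]
    simp only [← Nat.cast_smul_eq_nsmul K, smul_smul, smul_add, Nat.cast_mul, Nat.add_sub_cancel]
    rw [add_comm]
    congr 2 <;> ring
  rw [Finset.sum_congr rfl key, Finset.sum_add_distrib, ← Finset.sum_smul, ← Finset.sum_smul]
  module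

/-- The derivation `x ↦ x^(p-1) dx` from `K` to the Frobenius twist of `Ω^1(K) / dK`, which induces
the inverse Cartier operator. -/
def cartierDer : Derivation ℤ K (FrobeniusForms K p ⧸ exactForms K p) :=
  Derivation.mk'
    (AddMonoidHom.toIntLinearMap
      { toFun := fun x => (exactForms K p).mkQ (of K p (x ^ (p - 1) • KaehlerDifferential.D ℤ K x))
        map_zero' := by simp
        map_add' := fun x y => by
          obtain ⟨r, hr⟩ := add_pow_pred K p x y
          rw [map_add, hr, map_add (of K p), map_add (exactForms K p).mkQ, map_add (of K p),
            map_add (exactForms K p).mkQ, add_eq_left]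
          exact (Submodule.Quotient.mk_eq_zero _).mpr ⟨r, rfl⟩ })
    (fun x y => by
      obtain ⟨q, hq⟩ : ∃ q, p = q + 1 := ⟨p - 1, by have := (Fact.out : p.Prime).pos; omega⟩
      simp only [AddMonoidHom.coe_toIntLinearMap, AddMonoidHom.coe_mk, ZeroHom.coe_mk]
      rw [← LinearMap.map_smul, ← LinearMap.map_smul, ← LinearMap.map_add, smul_of, smul_of,
        ← map_add (of K p), Derivation.leibniz]
      congr 2
      simp only [smul_smul, smul_add, hq, Nat.add_sub_cancel]
      congr 2 <;> ring)

end FrobeniusForms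

/-- The inverse Cartier operator `Ω^1(K) → Ω^1(K) / dK`, sending `x da` to the class of
`x^p a^(p-1) da`. On logarithmic forms it is `x dlog a ↦ x^p dlog a`. -/
theorem exists_inverse_cartier (K : Type*) [Field K] (p : ℕ) [Fact p.Prime] [CharP K p] :
    ∃ γ : Ω[K⁄ℤ] →+ Ω[K⁄ℤ] ⧸ (KaehlerDifferential.D ℤ K : K →+ Ω[K⁄ℤ]).range,
      ∀ x a : K, γ (x • KaehlerDifferential.D ℤ K a) =
        QuotientAddGroup.mk (x ^ p • a ^ (p - 1) • KaehlerDifferential.D ℤ K a) := by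
  let e : FrobeniusForms K p ⧸ FrobeniusForms.exactForms K p →+
      Ω[K⁄ℤ] ⧸ (KaehlerDifferential.D ℤ K : K →+ Ω[K⁄ℤ]).range :=
    QuotientAddGroup.map _ _ (FrobeniusForms.of K p).symm.toAddMonoidHom (by
      rintro _ ⟨x, rfl⟩
      exact ⟨x, rfl⟩)
  refine ⟨e.comp (FrobeniusForms.cartierDer K p).liftKaehlerDifferential.toAddMonoidHom, ?_⟩
  intro x a
  simp only [AddMonoidHom.comp_apply, LinearMap.toAddMonoidHom_coe, map_smul,
    Derivation.liftKaehlerDifferential_comp_D]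
  rfl


/-! ### The Artin–Schreier extension -/

/-- If `b` is not of the form `x^p - x`, the Artin–Schreier polynomial is irreducible. The sum `s`
of the roots of a monic factor of degree `d` lies in `F` and satisfies `s^p - s = d b`; if `p` does
not divide `d` then `b = (s/d)^p - s/d`. So every irreducible factor has degree `p`. -/
theorem artinSchreier_irreducible {F : Type*} [Field F] {p : ℕ} [Fact p.Prime] [CharP F p]
    {b : F} (hb : ∀ x : F, b ≠ x ^ p - x) : Irreducible (X ^ p - X - C b : F[X]) := by
  have hp : p.Prime := Fact.out
  set f : F[X] := X ^ p - X - C b with hf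
  have hlt : (X + C b : F[X]).degree < p := by
    rw [degree_X_add_C]; exact_mod_cast hp.one_lt
  have hf' : f = X ^ p - (X + C b) := by rw [hf]; ring
  have hmon : f.Monic := by rw [hf']; exact monic_X_pow_sub hlt
  have hdeg : f.natDegree = p := by
    rw [hf']
    exact natDegree_eq_of_degree_eq_some ((degree_sub_eq_left_of_degree_lt (by rwa [degree_X_pow])).trans (degree_X_pow p))
  obtain ⟨g, hgm, hgi, hgf⟩ := exists_monic_irreducible_factor f
    (not_isUnit_of_natDegree_pos f (hdeg ▸ hp.pos))
  have hpg : p ∣ g.natDegree := by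
    by_contra hnd
    have hd : (g.natDegree : F) ≠ 0 := fun h => hnd ((CharP.cast_eq_zero_iff F p _).mp h)
    let K := f.SplittingField
    let ι : F →+* K := algebraMap F K
    have : CharP K p := charP_of_injective_algebraMap ι.injective p
    have hsplit : (g.map ι).Splits :=
      (SplittingField.splits f).of_dvd (hmon.map ι).ne_zero (Polynomial.map_dvd ι hgf)
    have hroot : ∀ r ∈ (g.map ι).roots, r ^ p - r = ι b := by
      intro r hr
      have h1 : (g.map ι).IsRoot r := isRoot_of_mem_roots hr
      have h2 := h1.dvd (Polynomial.map_dvd ι hgf)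
      simp only [hf, IsRoot.def, Polynomial.map_sub, Polynomial.map_pow, map_X, map_C, eval_sub,
        eval_pow, eval_X, eval_C] at h2
      exact sub_eq_zero.mp h2
    have hsum : ∀ s : Multiset K, (∀ r ∈ s, r ^ p - r = ι b) →
        s.sum ^ p - s.sum = Multiset.card s * ι b := by
      intro s
      induction s using Multiset.induction_on with
      | empty => simp [hp.ne_zero]
      | cons r s ih =>
        intro h
        have h1 := h r (Multiset.mem_cons_self r s)
        have h2 := ih fun t ht => h t (Multiset.mem_cons_of_mem ht)
        rw [Multiset.sum_cons, add_pow_char, Multiset.card_cons]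
        push_cast
        linear_combination h1 + h2
    have h3 := hsum _ hroot
    rw [← hsplit.natDegree_eq_card_roots, natDegree_map] at h3
    have h4 := hsplit.nextCoeff_eq_neg_sum_roots_of_monic (hgm.map ι)
    rw [nextCoeff_map ι.injective] at h4
    have h5 : (g.map ι).roots.sum = ι (-g.nextCoeff) := by rw [map_neg, h4, neg_neg]
    rw [h5, ← map_pow, ← map_sub, ← map_natCast ι, ← map_mul] at h3
    have h6 := ι.injective h3
    apply hb (-g.nextCoeff / g.natDegree)
    have h7 : (g.natDegree : F) ^ p = g.natDegree := by
      exact map_natCast (frobenius F p) _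
    rw [div_pow, h7, ← sub_div, h6, mul_div_cancel_left₀ _ hd]
  have hle : f.natDegree ≤ g.natDegree := hdeg.trans_le (Nat.le_of_dvd hgi.natDegree_pos hpg)
  rw [eq_of_monic_of_dvd_of_natDegree_le hgm hmon hgf hle]
  exact hgi

/-- The Artin–Schreier polynomial splits as soon as it has a root `t`: it is `X^p - X`, which splits
over the prime field, translated by `t`. -/
theorem artinSchreier_splits {F L : Type*} [Field F] [Field L] [Algebra F L] {p : ℕ}
    [Fact p.Prime] [CharP F p] {b : F} {t : L} (ht : t ^ p - t = algebraMap F L b) :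
    ((X ^ p - X - C b : F[X]).map (algebraMap F L)).Splits := by
  have : CharP L p := charP_of_injective_algebraMap (algebraMap F L).injective p
  let _ : Algebra (ZMod p) L := ZMod.algebra L p
  have h1 := ((GaloisField.splits_zmod_X_pow_sub_X p).map (algebraMap (ZMod p) L)).comp_X_sub_C t
  have h2 : (X ^ p - X - C b : F[X]).map (algebraMap F L) =
      ((X ^ p - X : (ZMod p)[X]).map (algebraMap (ZMod p) L)).comp (X - C t) := by
    simp only [Polynomial.map_sub, Polynomial.map_pow, map_X, map_C, sub_comp, pow_comp, X_comp]
    rw [sub_pow_char, ← C_pow, ← ht, C_sub]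
    ring
  rw [h2]
  exact h1

theorem artinSchreier_root {F : Type*} [Field F] {p : ℕ} {b : F} :
    AdjoinRoot.root (X ^ p - X - C b : F[X]) ^ p - AdjoinRoot.root (X ^ p - X - C b : F[X]) =
      algebraMap F (AdjoinRoot (X ^ p - X - C b : F[X])) b := by
  have h := AdjoinRoot.eval₂_root (X ^ p - X - C b : F[X])
  simp only [eval₂_sub, eval₂_pow, eval₂_X, eval₂_C] at h
  exact sub_eq_zero.mp h

theorem artinSchreier_isGalois {F : Type*} [Field F] {p : ℕ} [Fact p.Prime] [CharP F p]
    {b : F} [Fact (Irreducible (X ^ p - X - C b : F[X]))] :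
    IsGalois F (AdjoinRoot (X ^ p - X - C b : F[X])) := by
  set f : F[X] := X ^ p - X - C b with hf
  have hsep : f.Separable := by
    have h1 : derivative f = -1 := by simp [hf, derivative_X_pow]
    rw [separable_def, h1]
    exact ⟨0, -1, by ring⟩
  let L := AdjoinRoot f
  have hsplit : (f.map (algebraMap F L)).Splits := artinSchreier_splits artinSchreier_root
  have hadj : Algebra.adjoin F (f.rootSet L) = ⊤ := by
    rw [eq_top_iff, ← AdjoinRoot.adjoinRoot_eq_top]
    apply Algebra.adjoin_mono
    rintro _ rfl
    rw [mem_rootSet]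
    exact ⟨(Fact.out : Irreducible f).ne_zero, by simp⟩
  have : f.IsSplittingField F L := ⟨hsplit, hadj⟩
  exact IsGalois.of_separable_splitting_field hsep

/-! ### Trace of differential forms along a Galois extension -/

section Trace
variable (F L : Type*) [Field F] [Field L] [Algebra F L] [FiniteDimensional F L] [IsGalois F L]

omit [FiniteDimensional F L] in
theorem galois_formallyEtale : Algebra.FormallyEtale F L := Algebra.FormallyEtale.of_isSeparable F L

/-- The universal derivation of `L`, seen with values in `L ⊗ Ω^1(F)` through the isomorphism
`L ⊗ Ω^1(F) ≃ Ω^1(L)` for the étale extension `L/F`. -/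
def extD : Derivation ℤ L (L ⊗[F] Ω[F⁄ℤ]) :=
  haveI := galois_formallyEtale F L
  (KaehlerDifferential.tensorKaehlerEquivOfFormallyEtale ℤ F L).symm.toLinearMap.compDer
    (KaehlerDifferential.D ℤ L)

omit [FiniteDimensional F L] in
theorem extD_algebraMap (a : F) :
    extD F L (algebraMap F L a) = 1 ⊗ₜ KaehlerDifferential.D ℤ F a := by
  have := galois_formallyEtale F L
  exact KaehlerDifferential.tensorKaehlerEquivOfFormallyEtale_symm_D_algebraMap ℤ F L a

omit [FiniteDimensional F L] in
/-- A derivation on `L` vanishing on `F` is zero, because `L/F` is unramified. -/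
theorem der_ext (D : Derivation ℤ L (L ⊗[F] Ω[F⁄ℤ])) (h : ∀ a : F, D (algebraMap F L a) = 0) :
    D = 0 := by
  have := galois_formallyEtale F L
  let D' : Derivation F L (L ⊗[F] Ω[F⁄ℤ]) :=
    Derivation.mk'
      { toFun := D
        map_add' := map_add D
        map_smul' := fun c x => by
          rw [Algebra.smul_def, Derivation.leibniz, h, smul_zero, add_zero, RingHom.id_apply,
            algebraMap_smul] }
      D.leibniz
  have h0 : D' = 0 := by
    ext x
    rw [← Derivation.liftKaehlerDifferential_comp_D D' x,
      Subsingleton.elim (KaehlerDifferential.D F L x) 0, map_zero, Derivation.zero_apply]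
  ext x
  exact Derivation.congr_fun h0 x

/-- The action `σ ⊗ id` of the Galois group on `L ⊗ Ω^1(F) ≃ Ω^1(L)`. -/
def galConj (σ : L ≃ₐ[F] L) : L ⊗[F] Ω[F⁄ℤ] →ₗ[F] L ⊗[F] Ω[F⁄ℤ] :=
  σ.toLinearMap.rTensor _

omit [FiniteDimensional F L] [IsGalois F L] in
theorem galConj_smul (σ : L ≃ₐ[F] L) (c : L) (m : L ⊗[F] Ω[F⁄ℤ]) :
    galConj F L σ (c • m) = σ c • galConj F L σ m := by
  induction m with
  | zero => simp
  | add x y hx hy => rw [smul_add, map_add, hx, hy, map_add, smul_add]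
  | tmul x y => simp [galConj, smul_tmul']

omit [FiniteDimensional F L] in
/-- The Galois action commutes with the differential: `σ ∘ d ∘ σ⁻¹` is a derivation agreeing with `d`
on `F`. -/
theorem galConj_extD (σ : L ≃ₐ[F] L) (x : L) : galConj F L σ (extD F L x) = extD F L (σ x) := by
  let E : Derivation ℤ L (L ⊗[F] Ω[F⁄ℤ]) :=
    Derivation.mk'
      (AddMonoidHom.toIntLinearMap
        ((galConj F L σ).toAddMonoidHom.comp
          ((extD F L : L →+ L ⊗[F] Ω[F⁄ℤ]).comp (σ⁻¹ : L ≃ₐ[F] L).toRingEquiv.toAddMonoidHom)))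
      (fun x y => by
        change galConj F L σ (extD F L (σ⁻¹ (x * y))) =
          x • galConj F L σ (extD F L (σ⁻¹ y)) + y • galConj F L σ (extD F L (σ⁻¹ x))
        rw [map_mul, Derivation.leibniz, map_add, galConj_smul, galConj_smul]
        simp)
  have hE : ∀ y, E y = galConj F L σ (extD F L (σ⁻¹ y)) := fun _ => rfl
  have h0 : E - extD F L = 0 := by
    apply der_ext
    intro a
    rw [Derivation.sub_apply, hE, AlgEquiv.commutes, extD_algebraMap, sub_eq_zero]
    simp [galConj]
  have h1 := hE (σ x)
  rw [show E = extD F L from sub_eq_zero.mp h0] at h1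
  rw [h1]
  simp

/-- The trace `Tr ⊗ id : L ⊗ Ω^1(F) → Ω^1(F)`, i.e. the trace of 1-forms from `L` to `F`. -/
def formTrace : L ⊗[F] Ω[F⁄ℤ] →ₗ[F] Ω[F⁄ℤ] :=
  (TensorProduct.lid F (Ω[F⁄ℤ])).toLinearMap ∘ₗ (Algebra.trace F L).rTensor _

omit [FiniteDimensional F L] [IsGalois F L] in
theorem formTrace_tmul (c : L) (w : Ω[F⁄ℤ]) :
    formTrace F L (c ⊗ₜ w) = Algebra.trace F L c • w := by
  simp [formTrace]

theorem one_tmul_formTrace (m : L ⊗[F] Ω[F⁄ℤ]) :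
    (1 : L) ⊗ₜ[F] formTrace F L m = ∑ σ : L ≃ₐ[F] L, galConj F L σ m := by
  induction m with
  | zero => simp
  | add x y hx hy => rw [map_add, tmul_add, hx, hy, ← Finset.sum_add_distrib]; simp
  | tmul x y =>
    rw [formTrace_tmul, ← smul_tmul, ← Algebra.algebraMap_eq_smul_one,
      trace_eq_sum_automorphisms, sum_tmul]
    simp [galConj]

omit [FiniteDimensional F L] in
theorem one_tmul_injective : Function.Injective fun w : Ω[F⁄ℤ] => (1 : L) ⊗ₜ[F] w :=
  Module.FaithfullyFlat.tensorProduct_mk_injective (A := F) (B := L) _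

theorem formTrace_extD (x : L) :
    formTrace F L (extD F L x) = KaehlerDifferential.D ℤ F (Algebra.trace F L x) := by
  apply one_tmul_injective F L
  beta_reduce
  rw [one_tmul_formTrace, ← extD_algebraMap, trace_eq_sum_automorphisms, map_sum]
  simp only [galConj_extD]

theorem dlog_prod {K M ι : Type*} [Field K] [AddCommGroup M] [Module K M] (D : Derivation ℤ K M)
    (s : Finset ι) (f : ι → K) (hf : ∀ i ∈ s, f i ≠ 0) :
    (∏ i ∈ s, f i)⁻¹ • D (∏ i ∈ s, f i) = ∑ i ∈ s, (f i)⁻¹ • D (f i) := by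
  classical
  induction s using Finset.induction_on with
  | empty => simp
  | insert i s hi ih =>
    have h1 : f i ≠ 0 := hf i (Finset.mem_insert_self i s)
    have h2 : ∀ j ∈ s, f j ≠ 0 := fun j hj => hf j (Finset.mem_insert_of_mem hj)
    have h3 : ∏ i ∈ s, f i ≠ 0 := Finset.prod_ne_zero_iff.mpr h2
    rw [Finset.prod_insert hi, Finset.sum_insert hi, ← ih h2, Derivation.leibniz, smul_add,
      smul_smul, smul_smul, add_comm]
    congr 2 <;> field_simp

/-- The trace of `b dlog u` is `b dlog N(u)`, since over `L` the norm is the product of the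
conjugates and the trace the sum of the conjugates. -/
theorem formTrace_dlog (b : F) (u : L) (hu : u ≠ 0) :
    formTrace F L (algebraMap F L b • u⁻¹ • extD F L u) =
      b • (Algebra.norm F u)⁻¹ • KaehlerDifferential.D ℤ F (Algebra.norm F u) := by
  rw [algebraMap_smul, map_smul]
  congr 1
  apply one_tmul_injective F L
  beta_reduce
  rw [one_tmul_formTrace, ← smul_tmul, ← Algebra.algebraMap_eq_smul_one, ← mul_one
    (algebraMap F L _), ← smul_eq_mul, ← smul_tmul', ← extD_algebraMap, map_inv₀,
    Algebra.norm_eq_prod_automorphisms, dlog_prod]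
  · simp [galConj_smul, galConj_extD]
  · simpa using hu

end Trace

/-! ### The form `b dlog N(u)` -/

/-- If `b = t^p - t` becomes an Artin–Schreier element in `L`, then `b dlog N(u)` lies in every
subgroup `S` of `Ω^1(F)` containing the exact forms and all `(c^p - c) dlog a`. -/
theorem dlog_norm_mem {F L : Type*} [Field F] [Field L] [Algebra F L] [FiniteDimensional F L]
    [IsGalois F L] {p : ℕ} [Fact p.Prime] [CharP F p] (S : AddSubgroup (Ω[F⁄ℤ]))
    (hexact : ∀ x, KaehlerDifferential.D ℤ F x ∈ S)
    (hAS : ∀ c a : F, a ≠ 0 → (c ^ p - c) • a⁻¹ • KaehlerDifferential.D ℤ F a ∈ S)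
    {b : F} {t : L} (ht : t ^ p - t = algebraMap F L b) {u : L} (hu : u ≠ 0) :
    b • (Algebra.norm F u)⁻¹ • KaehlerDifferential.D ℤ F (Algebra.norm F u) ∈ S := by
  have hp : p.Prime := Fact.out
  have : CharP L p := charP_of_injective_algebraMap (algebraMap F L).injective p
  have := galois_formallyEtale F L
  obtain ⟨γ, hγ⟩ := exists_inverse_cartier L p
  let e := KaehlerDifferential.tensorKaehlerEquivOfFormallyEtale ℤ F L
  have heD : ∀ x, e (extD F L x) = KaehlerDifferential.D ℤ L x := fun x => e.apply_symm_apply _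
  let τ : Ω[L⁄ℤ] →+ Ω[F⁄ℤ] := (formTrace F L).toAddMonoidHom.comp e.symm.toLinearMap.toAddMonoidHom
  have hτe : ∀ m, τ (e m) = formTrace F L m := fun m =>
    congrArg (formTrace F L) (e.symm_apply_apply m)
  -- The trace maps exact forms to exact forms, hence induces a map modulo exact forms and `S`.
  let φ : Ω[L⁄ℤ] ⧸ (KaehlerDifferential.D ℤ L : L →+ Ω[L⁄ℤ]).range →+ Ω[F⁄ℤ] ⧸ S :=
    QuotientAddGroup.map _ _ τ (by
      rintro _ ⟨x, rfl⟩
      change τ (KaehlerDifferential.D ℤ L x) ∈ S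
      rw [← heD, hτe, formTrace_extD]
      exact hexact _)
  have hφ : ∀ w, φ (QuotientAddGroup.mk w) = QuotientAddGroup.mk (τ w) := fun _ => rfl
  -- `δ` is the trace of (inverse Cartier operator minus identity), i.e. of the Artin–Schreier map.
  let δ : L ⊗[F] Ω[F⁄ℤ] →+ Ω[F⁄ℤ] ⧸ S :=
    φ.comp (γ.comp e.toLinearMap.toAddMonoidHom) -
      (QuotientAddGroup.mk' S).comp (formTrace F L).toAddMonoidHom
  have hδ : ∀ m, δ m = φ (γ (e m)) - QuotientAddGroup.mk (formTrace F L m) := fun _ => rfl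
  have htr : ∀ c : L, Algebra.trace F L (c ^ p) = Algebra.trace F L c ^ p := by
    intro c
    apply (algebraMap F L).injective
    rw [RingHom.map_pow, trace_eq_sum_automorphisms, trace_eq_sum_automorphisms, sum_pow_char]
    simp only [map_pow]
  -- On `c da` with `a ∈ F` the Artin–Schreier map is compatible with the trace of `c`, so `δ`
  -- vanishes there; such forms generate `Ω^1(L)`.
  have hgen : ∀ (c : L) (a : F), δ (c ⊗ₜ KaehlerDifferential.D ℤ F a) = 0 := by
    intro c a
    rcases eq_or_ne a 0 with rfl | ha
    · simp
    have h1 : ∀ y : L, e (y ⊗ₜ KaehlerDifferential.D ℤ F a) =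
        y • KaehlerDifferential.D ℤ L (algebraMap F L a) := by
      intro y
      rw [← heD, ← map_smul, extD_algebraMap, smul_tmul', smul_eq_mul, mul_one]
    rw [hδ, h1, hγ, smul_smul, hφ, ← h1, hτe, formTrace_tmul, formTrace_tmul,
      ← QuotientAddGroup.mk_sub, QuotientAddGroup.eq_zero_iff, ← map_pow,
      mul_comm (c ^ p), ← Algebra.smul_def, map_smul, htr, ← sub_smul]
    convert hAS (Algebra.trace F L c * a) a ha using 1
    rw [smul_smul]
    congr 1
    obtain ⟨q, rfl⟩ : ∃ q, p = q + 1 := ⟨p - 1, by have := hp.pos; omega⟩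
    simp only [Nat.add_sub_cancel, smul_eq_mul]
    field_simp
    ring
  have hzero : ∀ m, δ m = 0 := by
    intro m
    induction m with
    | zero => exact map_zero δ
    | add x y hx hy => rw [map_add, hx, hy, add_zero]
    | tmul c w =>
      have hw : w ∈ Submodule.span F (Set.range (KaehlerDifferential.D ℤ F)) := by
        rw [KaehlerDifferential.span_range_derivation]; trivial
      induction hw using Submodule.span_induction generalizing c with
      | mem _ h => obtain ⟨a, rfl⟩ := h; exact hgen c a
      | zero => simp
      | add x y _ _ hx hy => rw [tmul_add, map_add, hx, hy, add_zero]
      | smul r x _ hx => rw [← smul_tmul]; exact hx _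
  -- On `t dlog u` the Artin–Schreier map takes the value `(t^p - t) dlog u = b dlog u`.
  have hfin := hzero (t • u⁻¹ • extD F L u)
  have h2 : t ^ p • (u⁻¹) ^ p • u ^ (p - 1) • KaehlerDifferential.D ℤ L u =
      e (t ^ p • u⁻¹ • extD F L u) := by
    rw [map_smul, map_smul, heD]
    congr 1
    rw [smul_smul]
    congr 1
    obtain ⟨q, rfl⟩ : ∃ q, p = q + 1 := ⟨p - 1, by have := hp.pos; omega⟩
    simp only [Nat.add_sub_cancel]
    rw [inv_pow]
    field_simp
    ring
  have h3 : formTrace F L (t ^ p • u⁻¹ • extD F L u) =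
      formTrace F L (algebraMap F L b • u⁻¹ • extD F L u) +
        formTrace F L (t • u⁻¹ • extD F L u) := by
    rw [← map_add, ← add_smul, ← ht, sub_add_cancel]
  rw [hδ, map_smul e, map_smul e, heD, smul_smul, hγ, mul_pow, mul_smul, h2, hφ, hτe,
    ← QuotientAddGroup.mk_sub, QuotientAddGroup.eq_zero_iff, h3, add_sub_cancel_right,
    formTrace_dlog F L b u hu] at hfin
  exact hfin

/-! ### Wedging with a family of 1-forms -/

/-- The linear map `w ↦ v₁ ∧ … ∧ w ∧ … ∧ vₙ` replacing the `i`-th factor `vᵢ` by `w`. -/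
def slot (F : Type*) [Field F] {n : ℕ} (v : Fin n → Ω[F⁄ℤ]) (i : Fin n) :
    Ω[F⁄ℤ] →ₗ[F] ⋀[F]^n (Ω[F⁄ℤ]) :=
  (exteriorPower.ιMulti F n (M := Ω[F⁄ℤ])).toMultilinearMap.toLinearMap v i

theorem slot_apply {F : Type*} [Field F] {n : ℕ} (v : Fin n → Ω[F⁄ℤ]) (i : Fin n) (w : Ω[F⁄ℤ]) :
    slot F v i w = wedge F n (Function.update v i w) := rfl

theorem slot_eq_zero {F : Type*} [Field F] {n : ℕ} (v : Fin n → Ω[F⁄ℤ]) {i j : Fin n}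
    (h : j ≠ i) : slot F v i (v j) = 0 :=
  (exteriorPower.ιMulti F n (M := Ω[F⁄ℤ])).map_update_self v h.symm

/-- The form `dlog a₁ ∧ … ∧ dx ∧ … ∧ dlog aₙ` is exact: with `r = ∏_{j ≠ i} aⱼ⁻¹` it equals
`da₁ ∧ … ∧ d(x r) ∧ … ∧ daₙ`, since `dr` is a combination of the other factors. -/
theorem slot_dlog_D_mem {F : Type*} [Field F] {n : ℕ} (a : Fin n → F) (ha : ∀ i, a i ≠ 0)
    (i : Fin n) (x : F) :
    slot F (fun j => (a j)⁻¹ • absD F (a j)) i (KaehlerDifferential.D ℤ F x) ∈ dOmega F n := by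
  set r : F := ∏ j ∈ Finset.univ.erase i, (a j)⁻¹ with hr
  have hr0 : r ≠ 0 := Finset.prod_ne_zero_iff.mpr fun j _ => inv_ne_zero (ha j)
  have h1 : ∀ w, slot F (fun j => (a j)⁻¹ • absD F (a j)) i w =
      r • slot F (fun j => absD F (a j)) i w := by
    intro w
    have h2 := (exteriorPower.ιMulti F n (M := Ω[F⁄ℤ])).toMultilinearMap.map_smul_univ
      (Function.update (fun j => (a j)⁻¹) i 1) (Function.update (fun j => absD F (a j)) i w)
    rw [Finset.prod_update_of_mem (Finset.mem_univ i), one_mul, Finset.sdiff_singleton_eq_erase]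
      at h2
    refine Eq.trans ?_ h2
    change exteriorPower.ιMulti F n _ = exteriorPower.ιMulti F n _
    congr 1
    ext1 j
    rcases eq_or_ne j i with rfl | hj
    · simp
    · simp [hj]
  have h3 : slot F (fun j => absD F (a j)) i (KaehlerDifferential.D ℤ F r) = 0 := by
    have h4 := dlog_prod (KaehlerDifferential.D ℤ F) (Finset.univ.erase i) (fun j => (a j)⁻¹)
      (fun j _ => inv_ne_zero (ha j))
    rw [← hr, inv_smul_eq_iff₀ hr0] at h4
    rw [h4, map_smul, map_sum, Finset.sum_eq_zero, smul_zero]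
    intro j hj
    rw [Derivation.leibniz_inv, smul_smul, map_smul]
    have h5 := slot_eq_zero (fun j => absD F (a j)) (Finset.ne_of_mem_erase hj)
    rw [show KaehlerDifferential.D ℤ F (a j) = absD F (a j) from rfl, h5, smul_zero]
  have h6 : slot F (fun j => absD F (a j)) i (KaehlerDifferential.D ℤ F (x * r)) =
      r • slot F (fun j => absD F (a j)) i (KaehlerDifferential.D ℤ F x) := by
    rw [Derivation.leibniz, map_add, map_smul, map_smul, h3, smul_zero, zero_add]
  rw [h1, ← h6, slot_apply]
  refine AddSubgroup.subset_closure ⟨Function.update a i (x * r), ?_⟩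
  congr 1
  ext1 j
  rcases eq_or_ne j i with rfl | hj
  · simp [absD]
  · simp [hj]

theorem slot_eq_logForm {F : Type*} [Field F] {n : ℕ} (a : Fin n → F) (i : Fin n) (c x : F) :
    slot F (fun j => (a j)⁻¹ • absD F (a j)) i (c • x⁻¹ • KaehlerDifferential.D ℤ F x) =
      logForm F n c (Function.update a i x) := by
  rw [map_smul, slot_apply, logForm]
  congr 2
  ext1 j
  rcases eq_or_ne j i with rfl | hj
  · simp [absD]
  · simp [hj]

theorem statement2 (F : Type*) [Field F] (p : ℕ) [Fact p.Prime] [CharP F p]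
    (n : ℕ) (hn : 1 ≤ n) (a : Fin n → F) (ha : ∀ i, a i ≠ 0)
    (b : F) (hb : ∀ x : F, b ≠ x ^ p - x)
    (u : AdjoinRoot (X ^ p - X - C b : F[X])) (β : F)
    (hβ : β = Algebra.norm F u) (hβ0 : β ≠ 0) (i : Fin n) :
    hClass F p n (logForm F n b a) =
      hClass F p n (logForm F n (b + a i * β) (Function.update a i (a i * β))) := by
  have hirr : Fact (Irreducible (X ^ p - X - C b : F[X])) := ⟨artinSchreier_irreducible hb⟩
  have hgal : IsGalois F (AdjoinRoot (X ^ p - X - C b : F[X])) := artinSchreier_isGalois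
  have hfin : FiniteDimensional F (AdjoinRoot (X ^ p - X - C b : F[X])) :=
    (AdjoinRoot.powerBasis hirr.out.ne_zero).finite
  have hu : u ≠ 0 := by
    rintro rfl
    exact hβ0 (hβ.trans (Algebra.norm_zero))
  let Φ := slot F (fun j => (a j)⁻¹ • absD F (a j)) i
  let S : AddSubgroup (Ω[F⁄ℤ]) := (hRel F p n).comap Φ.toAddMonoidHom
  have hexact : ∀ x, KaehlerDifferential.D ℤ F x ∈ S := fun x =>
    AddSubgroup.mem_sup_left (slot_dlog_D_mem a ha i x)
  have hAS : ∀ c x : F, x ≠ 0 → (c ^ p - c) • x⁻¹ • KaehlerDifferential.D ℤ F x ∈ S := by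
    intro c x hx
    refine AddSubgroup.mem_sup_right (AddSubgroup.subset_closure
      ⟨c, Function.update a i x, fun j => ?_, slot_eq_logForm a i _ x⟩)
    rcases eq_or_ne j i with rfl | hj
    · simpa using hx
    · simpa [hj] using ha j
  have hnorm := dlog_norm_mem S hexact hAS artinSchreier_root hu
  rw [← hβ] at hnorm
  have hmem := S.add_mem hnorm (hexact (a i * β))
  -- `b dlog β + d(aᵢβ) = (b + aᵢβ) dlog (aᵢβ) - b dlog aᵢ`.
  have hdiff : b • β⁻¹ • KaehlerDifferential.D ℤ F β + KaehlerDifferential.D ℤ F (a i * β) =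
      -(b • (a i)⁻¹ • KaehlerDifferential.D ℤ F (a i)) +
        (b + a i * β) • (a i * β)⁻¹ • KaehlerDifferential.D ℤ F (a i * β) := by
    have hai := ha i
    rw [Derivation.leibniz]
    match_scalars <;> field_simp
    ring
  rw [hdiff] at hmem
  have h := slot_eq_logForm a i b (a i)
  rw [Function.update_eq_self] at h
  refine (QuotientAddGroup.eq).mpr ?_
  rw [← h, ← slot_eq_logForm a i, ← map_neg, ← map_add]
  exact hmem

end
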